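/- Let C be a category with finite limits that is locally cartesian closed, and let p : E ⟶ B be a morphism. Then the structure morphism isContr_B(E) ⟶ B is a monomorphism; equivalently, isContr_B(E) is a subterminal object of the slice category C/B. -/

import Mathlib

open CategoryTheory Limits

/-- The internal object of contractibility `isContr_B(E) := p_! ((π₂)_* (Δ_p))` of a morphism
`p : E ⟶ B`, defined in a finitely complete category equipped with pushforward functors
(right adjoints to base change). -/
noncomputable def isContrObj {C : Type*} [Category C] [HasFiniteLimits C]
    (pushforward : ∀ {X Y : C} (f : X ⟶ Y), Over X ⥤ Over Y)
    {E B : C} (p : E ⟶ B) : Over B :=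
  (Over.map p).obj ((pushforward (pullback.snd p p)).obj (Over.mk (pullback.diagonal p)))

/-!
A generalized element of `(π₂)_* Δ_p` over a point `x` of `E` is a proof that every point of `E` in
the same fibre of `p` as `x` equals `x`. Hence two elements whose underlying points lie in the same
fibre have the same underlying point; and two elements over the same point agree, because `Δ_p` is
subterminal in its slice and right adjoints preserve subterminal objects.
-/

section Subterminal

variable {C D : Type*} [Category C] [Category D]

lemma isSubterminal_iff_mono_hom {X : C} (A : Over X) : IsSubterminal A ↔ Mono A.hom := by
  refine ⟨fun hA ↦ ⟨fun {T} u v huv ↦ ?_⟩, fun _ Z g h ↦ ?_⟩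
  · exact congrArg CommaMorphism.left
      (hA (Over.homMk u : Over.mk (u ≫ A.hom) ⟶ A) (Over.homMk v huv.symm))
  · ext
    rw [← cancel_mono A.hom, Over.w, Over.w]

lemma isSubterminal_obj_of_adjunction {F : C ⥤ D} {G : D ⥤ C} (adj : F ⊣ G) {A : D}
    (hA : IsSubterminal A) : IsSubterminal (G.obj A) :=
  fun _ _ _ ↦ (adj.homEquiv _ _).symm.injective (hA _ _)

lemma mono_hom_obj_of_adjunction {X : C} {Y : D} {F : Over Y ⥤ Over X} {G : Over X ⥤ Over Y}
    (adj : F ⊣ G) (A : Over X) [Mono A.hom] : Mono (G.obj A).hom :=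
  (isSubterminal_iff_mono_hom _).1
    (isSubterminal_obj_of_adjunction adj ((isSubterminal_iff_mono_hom A).2 ‹_›))

end Subterminal

section Pushforward

variable {C : Type*} [Category C]

lemma exists_lift_of_hom_pushforward {X Y : C} {f : X ⟶ Y} [HasPullbacksAlong f]
    {G : Over X ⥤ Over Y} (adj : Over.pullback f ⊣ G) {A : Over X} {T : C}
    (u : T ⟶ (G.obj A).left) (s : T ⟶ X) (hs : s ≫ f = u ≫ (G.obj A).hom) :
    ∃ t : T ⟶ A.left, t ≫ A.hom = s := by
  let k : (Over.pullback f).obj (Over.mk (u ≫ (G.obj A).hom)) ⟶ A :=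
    (adj.homEquiv _ _).symm (Over.homMk u)
  have hk : k.left ≫ A.hom = pullback.snd (u ≫ (G.obj A).hom) f := Over.w k
  let σ : T ⟶ pullback (u ≫ (G.obj A).hom) f := pullback.lift (𝟙 T) s (by simp [hs])
  exact ⟨σ ≫ k.left, by rw [Category.assoc, hk, pullback.lift_snd]⟩

variable {E B : C} {p : E ⟶ B} [HasPullback p p]

lemma eq_of_comp_diagonal_eq_lift {T : C} {x y : T ⟶ E} {h : x ≫ p = y ≫ p} {t : T ⟶ E}
    (ht : t ≫ pullback.diagonal p = pullback.lift x y h) : x = y :=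
  calc
    x = (t ≫ pullback.diagonal p) ≫ pullback.fst p p := by rw [ht, pullback.lift_fst]
    _ = (t ≫ pullback.diagonal p) ≫ pullback.snd p p := by simp
    _ = y := by rw [ht, pullback.lift_snd]

lemma eq_of_hom_pushforward_diagonal [HasPullbacksAlong (pullback.snd p p)]
    {G : Over (pullback p p) ⥤ Over E} (adj : Over.pullback (pullback.snd p p) ⊣ G) {T : C}
    (u : T ⟶ (G.obj (Over.mk (pullback.diagonal p))).left) {y : T ⟶ E}
    (hy : y ≫ p = (u ≫ (G.obj (Over.mk (pullback.diagonal p))).hom) ≫ p) :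
    y = u ≫ (G.obj (Over.mk (pullback.diagonal p))).hom := by
  obtain ⟨t, ht⟩ :=
    exists_lift_of_hom_pushforward adj u (pullback.lift y _ hy) (pullback.lift_snd _ _ hy)
  exact eq_of_comp_diagonal_eq_lift ht

end Pushforward

theorem isContr_hom_mono_general {C : Type*} [Category C] {E B : C} (p : E ⟶ B) [HasPullback p p]
    [HasPullbacksAlong (pullback.snd p p)] {G : Over (pullback p p) ⥤ Over E}
    (adj : Over.pullback (pullback.snd p p) ⊣ G) :
    Mono ((Over.map p).obj (G.obj (Over.mk (pullback.diagonal p)))).hom := by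
  let P := G.obj (Over.mk (pullback.diagonal p))
  have : Mono (Over.mk (pullback.diagonal p)).hom := inferInstanceAs (Mono (pullback.diagonal p))
  have : Mono P.hom := mono_hom_obj_of_adjunction adj _
  refine ⟨fun u v (huv : u ≫ P.hom ≫ p = v ≫ P.hom ≫ p) ↦ ?_⟩
  have same_point : u ≫ P.hom = v ≫ P.hom :=
    eq_of_hom_pushforward_diagonal adj v (by simpa only [Category.assoc] using huv)
  exact (cancel_mono P.hom).1 same_point

/-- In a locally cartesian closed category with finite limits, the structure morphism
`isContr_B(E) ⟶ B` is a monomorphism, i.e. `isContr_B(E)` is a subterminal object of the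
slice category `C/B`. -/
theorem isContr_hom_mono
    {C : Type*} [Category C] [HasFiniteLimits C]
    (pushforward : ∀ {X Y : C} (f : X ⟶ Y), Over X ⥤ Over Y)
    (adj : ∀ {X Y : C} (f : X ⟶ Y), Over.pullback f ⊣ pushforward f)
    {E B : C} (p : E ⟶ B) :
    Mono (isContrObj pushforward p).hom :=
  isContr_hom_mono_general p (adj _)
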